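/- Let X be a pseudocompact space with countable Suslin number, T a set, Y ⊆ ℝ^T a compact subspace in which the set {y ∈ Y : |supp y| ≤ ℵ₀} is dense, and let x₀ ∈ X and y₀ ∈ Y be non-isolated points. If there exists a separately continuous function f : X × Y → ℝ whose set of discontinuity points is exactly {(x₀, y₀)}, then there exist sequences (U_n)_{n=1}^∞ and (V_n)_{n=1}^∞ of nonempty open sets U_n ⊆ X and V_n ⊆ Y which converge to x₀ and y₀ respectively. -/

import Mathlib

/-- A sequence of subsets of a topological space converges to a point `x₀`
if every neighborhood of `x₀` eventually contains all the sets. -/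
def SeqConvergesTo {X : Type*} [TopologicalSpace X] (A : ℕ → Set X) (x₀ : X) : Prop :=
  ∀ U ∈ nhds x₀, ∃ n₀ : ℕ, ∀ n ≥ n₀, A n ⊆ U

/-- A function of two variables is separately continuous if all its sections in each
variable are continuous. -/
def SeparatelyContinuous {X Y : Type*} [TopologicalSpace X] [TopologicalSpace Y]
    (f : X × Y → ℝ) : Prop :=
  (∀ x, Continuous fun y => f (x, y)) ∧ (∀ y, Continuous fun x => f (x, y))

open Set Filter Topology

/-- In a pseudocompact completely regular space every sequence of nonempty open sets clusters. -/
lemma pc_cluster {X : Type*} [TopologicalSpace X] [CompletelyRegularSpace X]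
    (hpc : ∀ g : X → ℝ, Continuous g → ∃ M : ℝ, ∀ x, |g x| ≤ M)
    (A : ℕ → Set X) (hA : ∀ n, IsOpen (A n)) (hne : ∀ n, (A n).Nonempty) :
    ∃ x, ∀ N ∈ 𝓝 x, ∀ m : ℕ, ∃ j ≥ m, (A j ∩ N).Nonempty := by
  by_contra hcon
  push Not at hcon
  have hlf : LocallyFinite A := by
    intro x
    obtain ⟨N, hN, m, hm⟩ := hcon x
    refine ⟨N, hN, (Set.finite_lt_nat m).subset ?_⟩
    intro j hj
    by_contra hjm
    have := hm j (not_lt.mp hjm)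
    exact hj.ne_empty this
  choose a ha using hne
  have hg : ∀ n, ∃ g : X → ℝ, Continuous g ∧ g (a n) = 1 ∧ (∀ x, 0 ≤ g x) ∧
      ∀ x, x ∉ A n → g x = 0 := by
    intro n
    obtain ⟨g, hg, h0, h1⟩ := CompletelyRegularSpace.completely_regular (a n) (A n)ᶜ
      (hA n).isClosed_compl (by simpa using ha n)
    refine ⟨fun x => 1 - (g x : ℝ), by fun_prop, by simp [h0], fun x => ?_, fun x hx => ?_⟩
    · have := (g x).2.2
      linarith
    · have := h1 (show x ∈ (A n)ᶜ from hx)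
      simp [this]
  choose g hgc hg1 hg0 hgA using hg
  have hsub : ∀ n : ℕ, Function.support (fun x => (n : ℝ) * g n x) ⊆ A n := by
    intro n x hx
    by_contra h
    exact hx (by simp [hgA n x h])
  have hlf' : LocallyFinite fun n : ℕ => Function.support (fun x => (n : ℝ) * g n x) :=
    hlf.subset hsub
  have hcont : Continuous fun x => ∑ᶠ n : ℕ, (n : ℝ) * g n x :=
    continuous_finsum (fun n => by have := hgc n; fun_prop) hlf'
  obtain ⟨M, hM⟩ := hpc _ hcont
  obtain ⟨n, hn⟩ := exists_nat_gt M
  have h1 := (abs_le.mp (hM (a n))).2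
  have h2 : (n : ℝ) * g n (a n) ≤ ∑ᶠ n' : ℕ, (n' : ℝ) * g n' (a n) :=
    single_le_finsum n (hlf'.point_finite (a n))
      (fun j => mul_nonneg (Nat.cast_nonneg j) (hg0 j _))
  rw [hg1] at h2
  linarith

/-- Countable chain condition gives countable uniform nets. -/
lemma ccc_net {X Y : Type*} [TopologicalSpace X]
    (hSuslin : ∀ S : Set (Set X), (∀ U ∈ S, IsOpen U) → (∀ U ∈ S, U.Nonempty) →
      S.Pairwise Disjoint → S.Countable)
    (f : X × Y → ℝ) (x₀ : X)
    (H : ∀ x, x ≠ x₀ → ∀ ε > 0, ∀ᶠ x' in 𝓝 x, ∀ y, |f (x', y) - f (x, y)| < ε)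
    (ε : ℝ) (hε : 0 < ε) :
    ∃ S : Set X, S.Countable ∧ ∀ x, x ≠ x₀ → ∃ s ∈ S, ∀ y, |f (s, y) - f (x, y)| < ε := by
  obtain ⟨S, hS⟩ := zorn_subset
    {S : Set X | S ⊆ {x₀}ᶜ ∧ S.Pairwise fun s t => ¬ ∀ y, |f (s, y) - f (t, y)| < ε} (by
      intro c hc hch
      refine ⟨⋃₀ c, ⟨sUnion_subset fun s hs => (hc hs).1, ?_⟩, fun s hs => subset_sUnion_of_mem hs⟩
      exact (pairwise_sUnion hch.directedOn).2 fun s hs => (hc hs).2)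
  obtain ⟨hS1, hS2⟩ := hS.prop
  set O : X → Set X := fun s => interior {x' | ∀ y, |f (x', y) - f (s, y)| < ε / 2} with hO
  have hmem : ∀ s ∈ S, s ∈ O s := fun s hs =>
    mem_interior_iff_mem_nhds.2 (H s (hS1 hs) _ (half_pos hε))
  have hdis : ∀ s ∈ S, ∀ t ∈ S, s ≠ t → Disjoint (O s) (O t) := by
    intro s hs t ht hst
    rw [Set.disjoint_left]
    intro x hx hx'
    have h1 := interior_subset hx
    have h2 := interior_subset hx'
    refine hS2 hs ht hst fun y => ?_
    have a1 := abs_lt.mp (h1 y)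
    have a2 := abs_lt.mp (h2 y)
    rw [abs_lt]
    constructor <;> linarith [a1.1, a1.2, a2.1, a2.2]
  refine ⟨S, ?_, ?_⟩
  · have hc : (O '' S).Countable := by
      apply hSuslin
      · rintro _ ⟨s, -, rfl⟩
        exact isOpen_interior
      · rintro _ ⟨s, hs, rfl⟩
        exact ⟨s, hmem s hs⟩
      · rintro _ ⟨s, hs, rfl⟩ _ ⟨t, ht, rfl⟩ hne
        exact hdis s hs t ht fun h => hne (by rw [h])
    refine Set.countable_of_injective_of_countable_image ?_ hc
    intro s hs t ht hst
    by_contra hne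
    have := hdis s hs t ht hne
    rw [hst] at this
    exact Set.disjoint_left.mp this (hmem t ht) (hmem t ht)
  · intro x hx
    by_contra hcon
    push Not at hcon
    have hins : insert x S ∈ {S : Set X | S ⊆ {x₀}ᶜ ∧
        S.Pairwise fun s t => ¬ ∀ y, |f (s, y) - f (t, y)| < ε} := by
      refine ⟨insert_subset hx hS1, hS2.insert ?_⟩
      intro s hs _
      obtain ⟨y, hy⟩ := hcon s hs
      refine ⟨fun h => ?_, fun h => ?_⟩
      · have := h y
        rw [abs_sub_comm] at this
        linarith
      · linarith [h y]
    have hxS : x ∈ S := hS.le_of_ge hins (subset_insert x S) (mem_insert x S)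
    obtain ⟨y, hy⟩ := hcon x hxS
    simp at hy
    linarith

/-- The result for an arbitrary compact second factor. -/
lemma main_compact {X Y : Type*} [TopologicalSpace X] [CompletelyRegularSpace X]
    [TopologicalSpace Y] [CompactSpace Y] [RegularSpace Y]
    (hpc : ∀ g : X → ℝ, Continuous g → ∃ M : ℝ, ∀ x, |g x| ≤ M)
    (hSuslin : ∀ S : Set (Set X), (∀ U ∈ S, IsOpen U) → (∀ U ∈ S, U.Nonempty) →
      S.Pairwise Disjoint → S.Countable)
    (x₀ : X) (y₀ : Y) (hx₀ : ¬ IsOpen ({x₀} : Set X))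
    (f : X × Y → ℝ) (hf : SeparatelyContinuous f)
    (hD : {p : X × Y | ¬ ContinuousAt f p} = {(x₀, y₀)}) :
    ∃ (U : ℕ → Set X) (V : ℕ → Set Y),
      (∀ n, IsOpen (U n)) ∧ (∀ n, (U n).Nonempty) ∧
      (∀ n, IsOpen (V n)) ∧ (∀ n, (V n).Nonempty) ∧
      SeqConvergesTo U x₀ ∧ SeqConvergesTo V y₀ := by
  obtain ⟨hfy, hfx⟩ := hf
  have hcont : ∀ p, p ≠ (x₀, y₀) → ContinuousAt f p := by
    intro p hp
    by_contra h
    have : p ∈ {p : X × Y | ¬ ContinuousAt f p} := h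
    rw [hD] at this
    exact hp this
  have hdisc : ¬ ContinuousAt f (x₀, y₀) := by
    have : (x₀, y₀) ∈ {p : X × Y | ¬ ContinuousAt f p} := by rw [hD]; rfl
    exact this
  have hunif : ∀ x, x ≠ x₀ → ∀ ε > 0, ∀ᶠ x' in 𝓝 x, ∀ y, |f (x', y) - f (x, y)| < ε := by
    intro x hx ε hε
    have := (isCompact_univ (X := Y)).eventually_forall_of_forall_eventually (x₀ := x)
      (P := fun x' y => |f (x', y) - f (x, y)| < ε) (by
        intro y _
        have h1 : ContinuousAt f (x, y) := hcont _ (fun h => hx (congrArg Prod.fst h))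
        have h2 : ContinuousAt (fun p : X × Y => f (x, p.2)) (x, y) :=
          ((hfy x).comp continuous_snd).continuousAt
        have h3 : ContinuousAt (fun p : X × Y => |f p - f (x, p.2)|) (x, y) := (h1.sub h2).abs
        exact h3.eventually_lt_const (by simpa using hε))
    simpa using this
  -- countable dense family of sections
  choose S hSc hS using fun n : ℕ =>
    ccc_net hSuslin f x₀ hunif (1 / ((n : ℝ) + 1)) (by positivity)
  obtain ⟨d, hd⟩ := ((countable_iUnion hSc).insert x₀).exists_eq_range (insert_nonempty _ _)
  have hdet : ∀ y y', (∀ k, f (d k, y) = f (d k, y')) → ∀ x, f (x, y) = f (x, y') := by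
    intro y y' h
    have hne : ∀ x, x ≠ x₀ → f (x, y) = f (x, y') := by
      intro x hx
      by_contra hxy
      have hpos : 0 < |f (x, y) - f (x, y')| := abs_pos.2 (sub_ne_zero.2 hxy)
      obtain ⟨n, hn⟩ := exists_nat_one_div_lt (half_pos hpos)
      obtain ⟨s, hs, hsy⟩ := hS n x hx
      have : s ∈ range d := hd ▸ mem_insert_of_mem _ (mem_iUnion.2 ⟨n, hs⟩)
      obtain ⟨k, rfl⟩ := this
      have h1 := abs_lt.mp (hsy y)
      have h2 := abs_lt.mp (hsy y')
      have h3 := h k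
      have : |f (x, y) - f (x, y')| < 2 * (1 / ((n : ℝ) + 1)) := by
        rw [abs_lt]
        constructor <;> linarith [h1.1, h1.2, h2.1, h2.2]
      linarith
    intro x
    by_cases hx : x = x₀
    · have : ∃ k, d k = x₀ := by
        have : x₀ ∈ range d := hd ▸ mem_insert _ _
        exact this
      obtain ⟨k, hk⟩ := this
      rw [hx, ← hk]
      exact h k
    · exact hne x hx
  -- countable determining set in `Y`
  let Ψ : Y → (ℕ → ℝ) := fun y k => f (d k, y)
  have hΨ : Continuous Ψ := continuous_pi fun k => hfy (d k)
  haveI : Nonempty (range Ψ) := ⟨⟨Ψ y₀, y₀, rfl⟩⟩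
  have hzex : ∀ k, ∃ z, Ψ z = (TopologicalSpace.denseSeq (range Ψ) k : ℕ → ℝ) := fun k =>
    (TopologicalSpace.denseSeq (range Ψ) k).2
  choose z hz using hzex
  have hdetz : ∀ x x', (∀ k, f (x, z k) = f (x', z k)) → ∀ y, f (x, y) = f (x', y) := by
    intro x x' h y
    have hC : IsClosed {y | f (x, y) = f (x', y)} := isClosed_eq (hfy x) (hfy x')
    have hI : IsClosed ((↑) ⁻¹' (Ψ '' {y | f (x, y) = f (x', y)}) : Set (range Ψ)) :=
      ((hC.isCompact.image hΨ).isClosed).preimage continuous_subtype_val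
    have hsub : range (TopologicalSpace.denseSeq (range Ψ)) ⊆
        ((↑) ⁻¹' (Ψ '' {y | f (x, y) = f (x', y)}) : Set (range Ψ)) := by
      rintro _ ⟨k, rfl⟩
      exact ⟨z k, h k, hz k⟩
    have hall := hI.closure_subset_iff.2 hsub
      (TopologicalSpace.denseRange_denseSeq (range Ψ) ⟨Ψ y, y, rfl⟩)
    obtain ⟨y', hy', hyy⟩ := hall
    have := hdet y' y fun k => congrFun hyy k
    rw [← this x, ← this x']
    exact hy'
  -- failure of continuity
  obtain ⟨ε, hε, hbad⟩ : ∃ ε > 0, ∃ᶠ p in 𝓝 (x₀, y₀), ε < |f p - f (x₀, y₀)| := by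
    by_contra hcon
    push Not at hcon
    apply hdisc
    rw [ContinuousAt, Metric.tendsto_nhds]
    intro ε hε
    filter_upwards [hcon (ε / 2) (half_pos hε)] with p hp
    rw [Real.dist_eq]
    linarith
  have hstep : ∀ n : ℕ, ∃ (U : Set X) (V : Set Y), IsOpen U ∧ U.Nonempty ∧ IsOpen V ∧ V.Nonempty ∧
      (∀ x ∈ U, ∀ k ≤ n, |f (x, z k) - f (x₀, z k)| < 1 / ((n : ℝ) + 1)) ∧
      (∀ y ∈ V, ∀ k ≤ n, |f (d k, y) - f (d k, y₀)| < 1 / ((n : ℝ) + 1)) ∧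
      ∀ x ∈ U, ∀ y ∈ V, ε < |f (x, y) - f (x₀, y₀)| := by
    intro n
    have hn : (0 : ℝ) < 1 / ((n : ℝ) + 1) := by positivity
    let P : Set X := ⋂ k ∈ Iic n, {x | |f (x, z k) - f (x₀, z k)| < 1 / ((n : ℝ) + 1)}
    let Q : Set Y := ⋂ k ∈ Iic n, {y | |f (d k, y) - f (d k, y₀)| < 1 / ((n : ℝ) + 1)}
    have hP : IsOpen P := (finite_Iic n).isOpen_biInter fun k _ =>
      isOpen_lt (((hfx (z k)).sub continuous_const).abs) continuous_const
    have hQ : IsOpen Q := (finite_Iic n).isOpen_biInter fun k _ =>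
      isOpen_lt (((hfy (d k)).sub continuous_const).abs) continuous_const
    have hP0 : x₀ ∈ P := by simp only [P, mem_iInter]; intro k _; simpa using hn
    have hQ0 : y₀ ∈ Q := by simp only [Q, mem_iInter]; intro k _; simpa using hn
    obtain ⟨⟨x, y⟩, hxy, hx, hy⟩ :=
      (hbad.and_eventually (prod_mem_nhds (hP.mem_nhds hP0) (hQ.mem_nhds hQ0))).exists
    have hne : (x, y) ≠ (x₀, y₀) := by
      intro h
      rw [h] at hxy
      simp at hxy
      linarith
    have hc : ContinuousAt (fun p => |f p - f (x₀, y₀)|) (x, y) :=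
      ((hcont _ hne).sub continuousAt_const).abs
    have hev := hc.eventually_const_lt hxy
    rw [nhds_prod_eq] at hev
    obtain ⟨U', hU', V', hV', hUV⟩ := mem_prod_iff.1 hev
    refine ⟨interior U' ∩ P, interior V' ∩ Q, isOpen_interior.inter hP,
      ⟨x, mem_interior_iff_mem_nhds.2 hU', hx⟩, isOpen_interior.inter hQ,
      ⟨y, mem_interior_iff_mem_nhds.2 hV', hy⟩, ?_, ?_, ?_⟩
    · intro x hx k hk
      exact mem_iInter₂.1 hx.2 k hk
    · intro y hy k hk
      exact mem_iInter₂.1 hy.2 k hk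
    · intro x hx y hy
      exact hUV (mk_mem_prod (interior_subset hx.1) (interior_subset hy.1))
  choose U V hUo hUn hVo hVn hU hV hUV using hstep
  -- the cluster property
  have key : ∀ (m : ℕ → ℕ) (A : ℕ → Set X) (b : ℕ → Y), (∀ j, j ≤ m j) → (∀ j, IsOpen (A j)) →
      (∀ j, (A j).Nonempty) → (∀ j, A j ⊆ U (m j)) → (∀ j, b j ∈ V (m j)) →
      ∀ N ∈ 𝓝 x₀, ∀ M ∈ 𝓝 y₀, ∃ j, (A j ∩ N).Nonempty ∧ b j ∈ M := by
    intro m A b hm hAo hAn hAU hbV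
    obtain ⟨xs, hxs⟩ := pc_cluster hpc A hAo hAn
    let F : Filter (ℕ × X) := (atTop ×ˢ 𝓝 xs) ⊓ 𝓟 {p | p.2 ∈ A p.1}
    haveI : NeBot F := by
      refine Filter.inf_principal_neBot_iff.2 fun W hW => ?_
      obtain ⟨J, hJ, N, hN, hJN⟩ := mem_prod_iff.1 hW
      obtain ⟨j0, hj0⟩ := mem_atTop_sets.1 hJ
      obtain ⟨j, hj, x, hx, hxN⟩ := hxs N hN j0
      exact ⟨(j, x), hJN ⟨hj0 j hj, hxN⟩, hx⟩
    let G : Ultrafilter (ℕ × X) := Ultrafilter.of F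
    have hGF : (G : Filter (ℕ × X)) ≤ F := Ultrafilter.of_le F
    have hG1 : Tendsto Prod.fst (G : Filter (ℕ × X)) atTop :=
      tendsto_fst.mono_left (hGF.trans inf_le_left)
    have hG2 : Tendsto Prod.snd (G : Filter (ℕ × X)) (𝓝 xs) :=
      tendsto_snd.mono_left (hGF.trans inf_le_left)
    have hGA : ∀ᶠ p in (G : Filter (ℕ × X)), p.2 ∈ A p.1 :=
      hGF (mem_inf_of_right (mem_principal_self _))
    obtain ⟨ys, -, hys⟩ := (isCompact_univ (X := Y)).ultrafilter_le_nhds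
      (G.map fun p => b p.1) (by simp)
    have hG3 : Tendsto (fun p : ℕ × X => b p.1) (G : Filter (ℕ × X)) (𝓝 ys) := hys
    have hlim : Tendsto (fun p : ℕ × X => 1 / ((m p.1 : ℝ) + 1)) (G : Filter (ℕ × X)) (𝓝 0) :=
      (tendsto_one_div_add_atTop_nhds_zero_nat (𝕜 := ℝ)).comp
        ((tendsto_atTop_mono hm tendsto_id).comp hG1)
    have hxeq : ∀ y, f (xs, y) = f (x₀, y) := by
      apply hdetz
      intro k
      have h1 : Tendsto (fun p : ℕ × X => |f (p.2, z k) - f (x₀, z k)|) (G : Filter (ℕ × X))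
          (𝓝 |f (xs, z k) - f (x₀, z k)|) :=
        ((((hfx (z k)).tendsto xs).comp hG2).sub_const _).abs
      have h2 : |f (xs, z k) - f (x₀, z k)| ≤ 0 := by
        refine le_of_tendsto_of_tendsto h1 hlim ?_
        filter_upwards [hGA, hG1.eventually_ge_atTop k] with p hp hpk
        exact (hU _ _ (hAU _ hp) k (hpk.trans (hm _))).le
      exact sub_eq_zero.1 (abs_nonpos_iff.1 h2)
    have hyeq : ∀ x, f (x, ys) = f (x, y₀) := by
      apply hdet
      intro k
      have h1 : Tendsto (fun p : ℕ × X => |f (d k, b p.1) - f (d k, y₀)|) (G : Filter (ℕ × X))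
          (𝓝 |f (d k, ys) - f (d k, y₀)|) :=
        ((((hfy (d k)).tendsto ys).comp hG3).sub_const _).abs
      have h2 : |f (d k, ys) - f (d k, y₀)| ≤ 0 := by
        refine le_of_tendsto_of_tendsto h1 hlim ?_
        filter_upwards [hG1.eventually_ge_atTop k] with p hpk
        exact (hV _ _ (hbV _) k (hpk.trans (hm _))).le
      exact sub_eq_zero.1 (abs_nonpos_iff.1 h2)
    have heq : (xs, ys) = (x₀, y₀) := by
      by_contra hne
      have hc := (hcont _ hne).tendsto
      rw [nhds_prod_eq] at hc
      have h1 : Tendsto (fun p : ℕ × X => |f (p.2, b p.1) - f (x₀, y₀)|) (G : Filter (ℕ × X))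
          (𝓝 |f (xs, ys) - f (x₀, y₀)|) := ((hc.comp (hG2.prodMk hG3)).sub_const _).abs
      have h2 : ε ≤ |f (xs, ys) - f (x₀, y₀)| := by
        refine ge_of_tendsto h1 ?_
        filter_upwards [hGA] with p hp
        exact (hUV _ _ (hAU _ hp) _ (hbV _)).le
      rw [hxeq, hyeq] at h2
      simp at h2
      linarith
    obtain ⟨rfl, rfl⟩ := Prod.mk.inj heq
    intro N hN M hM
    obtain ⟨p, hp, hpN, hpM⟩ := (hGA.and ((hG2.eventually_mem hN).and (hG3.eventually_mem hM))).exists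
    exact ⟨p.1, ⟨p.2, hp, hpN⟩, hpM⟩
  refine ⟨U, V, hUo, hUn, hVo, hVn, ?_, ?_⟩
  · intro N hN
    by_contra hcon
    push Not at hcon
    obtain ⟨K, hK, hKc, hKN⟩ := exists_mem_nhds_isClosed_subset hN
    choose m hm hmN using hcon
    obtain ⟨j, ⟨x, hx, hxK⟩, -⟩ := key m (fun j => U (m j) \ K) (fun j => (hVn (m j)).some) hm
      (fun j => (hUo _).sdiff hKc)
      (fun j => by
        obtain ⟨x, hx, hxN⟩ := not_subset.1 (hmN j)
        exact ⟨x, hx, fun h => hxN (hKN h)⟩)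
      (fun j => diff_subset) (fun j => (hVn (m j)).some_mem) K hK univ univ_mem
    exact hx.2 hxK
  · intro N hN
    by_contra hcon
    push Not at hcon
    choose m hm hmN using hcon
    choose b hb hbN using fun j => not_subset.1 (hmN j)
    obtain ⟨j, -, hj⟩ := key m (fun j => U (m j)) b hm (fun j => hUo _) (fun j => hUn _)
      (fun j => subset_rfl) hb univ univ_mem N hN
    exact hbN j hj

/-- let `X` be pseudocompact with countable Suslin number and
`Y ⊆ ℝ^T` compact with the points of at most countable support dense in `Y`, with
non-isolated points `x₀ ∈ X`, `y₀ ∈ Y`. If some separately continuous `f : X × Y → ℝ`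
has discontinuity set exactly `{(x₀, y₀)}`, then there exist sequences of nonempty
open sets converging to `x₀` and to `y₀`. -/
theorem exists_open_seq_of_onepoint_discontinuity_suslin_pseudocompact {X : Type*}
    [TopologicalSpace X] [CompletelyRegularSpace X]
    (hpc : ∀ g : X → ℝ, Continuous g → ∃ M : ℝ, ∀ x, |g x| ≤ M)
    (hSuslin : ∀ S : Set (Set X), (∀ U ∈ S, IsOpen U) → (∀ U ∈ S, U.Nonempty) →
      S.Pairwise Disjoint → S.Countable)
    {T : Type*} (Y : Set (T → ℝ)) (hYcomp : IsCompact Y)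
    (hYdense : Y ⊆ closure {y | y ∈ Y ∧ {t | y t ≠ 0}.Countable})
    (x₀ : X) (y₀ : Y) (hx₀ : ¬ IsOpen ({x₀} : Set X)) (hy₀ : ¬ IsOpen ({y₀} : Set Y))
    (f : X × Y → ℝ) (hf : SeparatelyContinuous f)
    (hD : {p : X × Y | ¬ ContinuousAt f p} = {(x₀, y₀)}) :
    ∃ (U : ℕ → Set X) (V : ℕ → Set Y),
      (∀ n, IsOpen (U n)) ∧ (∀ n, (U n).Nonempty) ∧
      (∀ n, IsOpen (V n)) ∧ (∀ n, (V n).Nonempty) ∧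
      SeqConvergesTo U x₀ ∧ SeqConvergesTo V y₀ := by
  haveI : CompactSpace Y := isCompact_iff_compactSpace.1 hYcomp
  exact main_compact hpc hSuslin x₀ y₀ hx₀ f hf hD
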